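/- arXiv:1511.09189 — 2 statements merged into one kernel-verified Lean document; each statement's English description precedes it below -/
import Mathlib

section
/- Let x be an n×n positive definite complex matrix and h an arbitrary n×n complex matrix. Then Tr( h* · D log(x) h ) = ∫₀¹ Tr( h* · (λ L_x + (1−λ) R_x)⁻¹ h ) dλ, where L_x and R_x denote left and right multiplication by x on the space of n×n matrices, (λ L_x + (1−λ) R_x)⁻¹ is the inverse of this positive definite linear operator on matrices (for λ ∈ [0,1]), and D log(x) is the Fréchet differential at x of the matrix logarithm. -/
open Matrix
open scoped ComplexOrder

attribute [local instance] Matrix.normedAddCommGroup Matrix.normedSpace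

/-- The matrix function induced by `f : ℝ → ℝ` via the functional calculus
(defined to be `0` on non-Hermitian matrices). -/
noncomputable def matFun {m : Type*} [Fintype m] [DecidableEq m] (f : ℝ → ℝ)
    (x : Matrix m m ℂ) : Matrix m m ℂ :=
  if hx : x.IsHermitian then
    (hx.eigenvectorUnitary : Matrix m m ℂ) *
      Matrix.diagonal (fun i => (f (hx.eigenvalues i) : ℂ)) *
      star (hx.eigenvectorUnitary : Matrix m m ℂ)
  else 0

/-- `D` is the (complex-linear extension of the) Fréchet differential at `x` of the matrix
function induced by `f`, the differential being taken within the real subspace of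
Hermitian matrices. -/
noncomputable def IsFDerivMatFun {m : Type*} [Fintype m] [DecidableEq m] (f : ℝ → ℝ)
    (x : Matrix m m ℂ) (D : Matrix m m ℂ →L[ℂ] Matrix m m ℂ) : Prop :=
  HasFDerivWithinAt (matFun f) (D.restrictScalars ℝ) {y : Matrix m m ℂ | y.IsHermitian} x

/-- `f : (0,∞) → ℝ` (given together with its derivative `f'`) is a matrix entropy:
it is twice continuously differentiable and for every `n` the map
`(x, h) ↦ Tr (h* ⬝ (Df' x) h)` is jointly convex in pairs `(x, h)` of an `n × n`
positive definite matrix `x` and an arbitrary `n × n` matrix `h`. -/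
noncomputable def IsMatrixEntropy (f f' : ℝ → ℝ) : Prop :=
  ContDiffOn ℝ 2 f (Set.Ioi 0) ∧
  (∀ t ∈ Set.Ioi (0 : ℝ), HasDerivAt f (f' t) t) ∧
  ∀ (n : ℕ)
    (D : Matrix (Fin n) (Fin n) ℂ → (Matrix (Fin n) (Fin n) ℂ →L[ℂ] Matrix (Fin n) (Fin n) ℂ)),
    (∀ x : Matrix (Fin n) (Fin n) ℂ, x.PosDef → IsFDerivMatFun f' x (D x)) →
    ConvexOn ℝ {q : Matrix (Fin n) (Fin n) ℂ × Matrix (Fin n) (Fin n) ℂ | q.1.PosDef}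
      (fun q => (Matrix.trace (q.2ᴴ * (D q.1) q.2)).re)

/-- The partial trace over the second tensor factor. -/
noncomputable def ptrace {ι₁ ι₂ : Type*} [Fintype ι₂]
    (ρ : Matrix (ι₁ × ι₂) (ι₁ × ι₂) ℂ) : Matrix ι₁ ι₁ ℂ :=
  Matrix.of fun i j => ∑ k : ι₂, ρ (i, k) (j, k)

section
attribute [local instance] Matrix.linftyOpNormedRing Matrix.linftyOpNormedAlgebra Matrix.linftyOpNormedAddCommGroup Matrix.linftyOpNormedSpace

theorem aux_hasDerivAt_exp {n : ℕ} (K : Matrix (Fin n) (Fin n) ℂ) :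
    HasDerivAt (fun t : ℝ => NormedSpace.exp (t • K)) K 0 := by
  have := hasDerivAt_exp_smul_const (𝕂 := ℝ) K (0 : ℝ)
  simp only [zero_smul, NormedSpace.exp_zero, one_mul] at this
  exact this

theorem aux_entry {n : ℕ} (F : ℝ → Matrix (Fin n) (Fin n) ℂ) (F' : Matrix (Fin n) (Fin n) ℂ)
    (t : ℝ) (hF : HasDerivAt F F' t) (i j : Fin n) :
    HasDerivAt (fun t => F t i j) (F' i j) t := by
  let L : Matrix (Fin n) (Fin n) ℂ →ₗ[ℝ] ℂ := Matrix.entryLinearMap ℝ ℂ i j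
  have := (LinearMap.toContinuousLinearMap L).hasFDerivAt.comp_hasDerivAt t hF
  exact this

theorem aux_mul_exp {n : ℕ} (x K : Matrix (Fin n) (Fin n) ℂ) (i j : Fin n) :
    HasDerivAt (fun t : ℝ => (x * NormedSpace.exp (t • K)) i j) ((x * K) i j) 0 :=
  aux_entry (fun t : ℝ => x * NormedSpace.exp (t • K)) _ _
    ((aux_hasDerivAt_exp K).const_mul x) i j

theorem aux_conj_exp {n : ℕ} (x K : Matrix (Fin n) (Fin n) ℂ) (i j : Fin n) :
    HasDerivAt (fun t : ℝ => (NormedSpace.exp (t • K) * x * NormedSpace.exp (t • (-K))) i j)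
      ((K * x - x * K) i j) 0 := by
  have := ((aux_hasDerivAt_exp K).mul_const x).mul (aux_hasDerivAt_exp (-K))
  have := aux_entry _ _ _ this i j
  simpa [sub_eq_add_neg] using this
end

theorem aux_pi {n : ℕ} (F : ℝ → Matrix (Fin n) (Fin n) ℂ) (F' : Matrix (Fin n) (Fin n) ℂ)
    (t : ℝ) (hF : ∀ i j, HasDerivAt (fun t => F t i j) (F' i j) t) : HasDerivAt F F' t := by
  refine hasDerivAt_pi.2 fun i => hasDerivAt_pi.2 fun j => hF i j

theorem aux_matFun {n : ℕ} (f : ℝ → ℝ) (W : Matrix (Fin n) (Fin n) ℂ) (v : Fin n → ℝ)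
    (h1 : star W * W = 1) (h2 : W * star W = 1) :
    matFun f (W * diagonal (fun i => (v i : ℂ)) * star W) =
      W * diagonal (fun i => (f (v i) : ℂ)) * star W := by
  have hh : (W * diagonal (fun i => (v i : ℂ)) * star W).IsHermitian := by
    rw [star_eq_conjTranspose]
    apply isHermitian_mul_mul_conjTranspose
    rw [IsHermitian, diagonal_conjTranspose]
    congr 1; ext i; simp
  rw [matFun, dif_pos hh]
  have hs := hh.spectral_theorem
  rw [Unitary.conjStarAlgAut_apply] at hs
  set U : Matrix (Fin n) (Fin n) ℂ := (hh.eigenvectorUnitary : Matrix (Fin n) (Fin n) ℂ) with hU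
  have u1 : star U * U = 1 := Unitary.coe_star_mul_self hh.eigenvectorUnitary
  have u2 : U * star U = 1 := Unitary.coe_mul_star_self hh.eigenvectorUnitary
  generalize hh.eigenvalues = e at *
  have key : diagonal (fun i => (v i : ℂ)) * (star W * U) = (star W * U) * diagonal (fun i => (e i : ℂ)) := by
    calc _ = (star W * W) * diagonal (fun i => (v i : ℂ)) * (star W * U) := by rw [h1, one_mul]
      _ = star W * (W * diagonal (fun i => (v i : ℂ)) * star W) * U := by simp only [Matrix.mul_assoc]
      _ = star W * (U * diagonal (fun i => (e i : ℂ)) * star U) * U := by rw [hs]; rfl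
      _ = star W * U * diagonal (fun i => (e i : ℂ)) * (star U * U) := by simp only [Matrix.mul_assoc]
      _ = _ := by rw [u1, mul_one]
  have key2 : diagonal (fun i => (f (v i) : ℂ)) * (star W * U) = (star W * U) * diagonal (fun i => (f (e i) : ℂ)) := by
    ext i j
    have := congrFun (congrFun key i) j
    rw [diagonal_mul, mul_diagonal] at this ⊢
    by_cases hz : (star W * U) i j = 0
    · rw [hz]; simp
    · rw [mul_comm] at this
      have := mul_left_cancel₀ hz this
      rw [Complex.ofReal_inj] at this
      rw [this, mul_comm]
  calc _ = (W * star W) * U * diagonal (fun i => (f (e i) : ℂ)) * star U := by rw [h2, one_mul]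
    _ = W * ((star W * U) * diagonal (fun i => (f (e i) : ℂ))) * star U := by simp only [Matrix.mul_assoc]
    _ = W * diagonal (fun i => (f (v i) : ℂ)) * star W * (U * star U) := by
      rw [← key2]; simp only [Matrix.mul_assoc]
    _ = _ := by rw [u2, mul_one]

theorem aux_exp_conj {n : ℕ} (W : Matrix (Fin n) (Fin n) ℂ) (v : Fin n → ℝ)
    (h1 : star W * W = 1) (h2 : W * star W = 1) :
    NormedSpace.exp (W * diagonal (fun i => (v i : ℂ)) * star W) =
      W * diagonal (fun i => ((Real.exp (v i) : ℝ) : ℂ)) * star W := by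
  have := Matrix.exp_units_conj ⟨W, star W, h2, h1⟩ (diagonal (fun i => (v i : ℂ)))
  simp only [Units.inv_mk] at this
  refine this.trans ?_
  rw [Matrix.exp_diagonal]
  congr 3
  ext i
  rw [Pi.coe_exp]
  simp [Complex.exp_eq_exp_ℂ]

theorem aux_log_exp {n : ℕ} (k : Matrix (Fin n) (Fin n) ℂ) (hk : k.IsHermitian) :
    matFun Real.log (NormedSpace.exp k) = k := by
  have hs := hk.spectral_theorem
  rw [Unitary.conjStarAlgAut_apply] at hs
  have u1 := Unitary.coe_star_mul_self hk.eigenvectorUnitary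
  have u2 := Unitary.coe_mul_star_self hk.eigenvectorUnitary
  conv_lhs => rw [hs]
  have := aux_exp_conj _ hk.eigenvalues u1 u2
  refine (congrArg _ this).trans ?_
  rw [aux_matFun _ _ _ u1 u2]
  simp only [Real.log_exp]
  exact hs.symm

theorem aux_scalar (a b : ℝ) (ha : 0 < a) (hb : 0 < b) :
    ∫ t in (0:ℝ)..1, (t * a + (1 - t) * b)⁻¹ =
      if a = b then a⁻¹ else (Real.log a - Real.log b) / (a - b) := by
  split_ifs with hab
  · subst hab
    have : ∀ t : ℝ, t * a + (1 - t) * a = a := fun t => by ring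
    simp [this]
  · have hne : a - b ≠ 0 := sub_ne_zero.2 hab
    have hpos : ∀ t ∈ Set.uIcc (0:ℝ) 1, 0 < t * a + (1 - t) * b := by
      intro t ht
      rw [Set.uIcc_of_le zero_le_one] at ht
      rcases ht.1.eq_or_lt with h0 | h0
      · rw [← h0]; simpa using hb
      · have := mul_pos h0 ha
        have := mul_nonneg (sub_nonneg.2 ht.2) hb.le
        linarith
    rw [intervalIntegral.integral_eq_sub_of_hasDerivAt
      (f := fun t => Real.log (t * a + (1 - t) * b) / (a - b))]
    · simp
      exact (sub_div _ _ _).symm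
    · intro t ht
      have h1 : HasDerivAt (fun t : ℝ => t * a + (1 - t) * b) (a - b) t := by
        have := ((hasDerivAt_id t).mul_const a).add (((hasDerivAt_id t).const_sub 1).mul_const b)
        have e : 1 * a + -1 * b = a - b := by ring
        rw [e] at this
        exact this
      have := (h1.log (hpos t ht).ne').div_const (a - b)
      have e : (a - b) / (t * a + (1 - t) * b) / (a - b) = (t * a + (1 - t) * b)⁻¹ := by
        have := (hpos t ht).ne'
        field_simp
      rw [e] at this
      exact this
    · apply ContinuousOn.intervalIntegrable
      apply ContinuousOn.inv₀ (by fun_prop)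
      intro t ht; exact (hpos t ht).ne'

theorem aux_path {n : ℕ} (x : Matrix (Fin n) (Fin n) ℂ)
    (Dlog : Matrix (Fin n) (Fin n) ℂ →L[ℂ] Matrix (Fin n) (Fin n) ℂ)
    (hD : IsFDerivMatFun Real.log x Dlog) (y z : ℝ → Matrix (Fin n) (Fin n) ℂ)
    (y' z' : Matrix (Fin n) (Fin n) ℂ) (hy0 : y 0 = x) (hy : HasDerivAt y y' 0)
    (hz : HasDerivAt z z' 0) (hH : ∀ t, (y t).IsHermitian)
    (hyz : ∀ t, matFun Real.log (y t) = z t) : Dlog y' = z' := by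
  subst hy0
  have h1 := HasFDerivWithinAt.comp_hasDerivWithinAt (s := Set.univ) (0 : ℝ) hD
    hy.hasDerivWithinAt (fun t _ => hH t)
  rw [hasDerivWithinAt_univ] at h1
  have h2 : matFun Real.log ∘ y = z := funext hyz
  rw [h2] at h1
  exact h1.unique hz

/-- Commutator direction. -/
theorem aux_comm {n : ℕ} (U : Matrix (Fin n) (Fin n) ℂ) (d : Fin n → ℝ)
    (u1 : star U * U = 1) (u2 : U * star U = 1)
    (Dlog : Matrix (Fin n) (Fin n) ℂ →L[ℂ] Matrix (Fin n) (Fin n) ℂ)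
    (hD : IsFDerivMatFun Real.log (U * diagonal (fun i => (d i : ℂ)) * star U) Dlog)
    (K : Matrix (Fin n) (Fin n) ℂ) (hK : Kᴴ = -K) :
    Dlog (K * (U * diagonal (fun i => (d i : ℂ)) * star U)
        - (U * diagonal (fun i => (d i : ℂ)) * star U) * K) =
      K * (U * diagonal (fun i => (Real.log (d i) : ℂ)) * star U)
        - (U * diagonal (fun i => (Real.log (d i) : ℂ)) * star U) * K := by
  have hstar : ∀ t : ℝ, NormedSpace.exp (t • (-K)) = star (NormedSpace.exp (t • K)) := by
    intro t
    rw [star_eq_conjTranspose, ← Matrix.exp_conjTranspose, conjTranspose_smul, hK]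
    simp
  have e1 : ∀ t : ℝ, NormedSpace.exp (t • (-K)) * NormedSpace.exp (t • K) = 1 := by
    intro t
    rw [← Matrix.exp_add_of_commute]
    · simp
    · rw [smul_neg]; exact (Commute.refl _).neg_left
  have e2 : ∀ t : ℝ, NormedSpace.exp (t • K) * NormedSpace.exp (t • (-K)) = 1 := fun t =>
    mul_eq_one_comm.1 (e1 t)
  have conj : ∀ (t : ℝ) (D : Matrix (Fin n) (Fin n) ℂ),
      NormedSpace.exp (t • K) * (U * D * star U) * NormedSpace.exp (t • (-K)) =
      (NormedSpace.exp (t • K) * U) * D * star (NormedSpace.exp (t • K) * U) := by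
    intro t D
    rw [star_mul, hstar]
    simp only [Matrix.mul_assoc]
  have w1 : ∀ t : ℝ, star (NormedSpace.exp (t • K) * U) * (NormedSpace.exp (t • K) * U) = 1 := by
    intro t
    rw [star_mul, ← hstar]
    calc _ = star U * (NormedSpace.exp (t • (-K)) * NormedSpace.exp (t • K)) * U := by
          simp only [Matrix.mul_assoc]
      _ = 1 := by rw [e1, mul_one, u1]
  refine aux_path _ Dlog hD
    (fun t => NormedSpace.exp (t • K) * (U * diagonal (fun i => (d i : ℂ)) * star U)
      * NormedSpace.exp (t • (-K)))
    (fun t => NormedSpace.exp (t • K) * (U * diagonal (fun i => (Real.log (d i) : ℂ)) * star U)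
      * NormedSpace.exp (t • (-K))) _ _ ?_ (aux_pi _ _ _ (aux_conj_exp _ _))
    (aux_pi _ _ _ (aux_conj_exp _ _)) ?_ ?_
  · simp
  · intro t
    rw [conj, star_eq_conjTranspose]
    apply isHermitian_mul_mul_conjTranspose
    rw [IsHermitian, diagonal_conjTranspose]
    congr 1; ext i; simp
  · intro t
    rw [conj, conj]
    exact aux_matFun _ _ _ (w1 t) (mul_eq_one_comm.1 (w1 t))

/-- Commuting direction. -/
theorem aux_commute {n : ℕ} (x l : Matrix (Fin n) (Fin n) ℂ) (hl : l.IsHermitian)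
    (hxl : NormedSpace.exp l = x)
    (Dlog : Matrix (Fin n) (Fin n) ℂ →L[ℂ] Matrix (Fin n) (Fin n) ℂ)
    (hD : IsFDerivMatFun Real.log x Dlog)
    (k : Matrix (Fin n) (Fin n) ℂ) (hk : k.IsHermitian) (hc : Commute l k) :
    Dlog (x * k) = k := by
  have hexp : ∀ t : ℝ, x * NormedSpace.exp (t • k) = NormedSpace.exp (l + t • k) := by
    intro t
    rw [Matrix.exp_add_of_commute _ _ (hc.smul_right t), hxl]
  have hH : ∀ t : ℝ, (l + t • k).IsHermitian := by
    intro t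
    refine hl.add ?_
    rw [IsHermitian, conjTranspose_smul, hk.eq]; simp
  refine aux_path _ Dlog hD (fun t => x * NormedSpace.exp (t • k)) (fun t => l + t • k) _ _ ?_
    (aux_pi _ _ _ (aux_mul_exp _ _)) ?_ ?_ ?_
  · simp
  · have := ((hasDerivAt_id (0 : ℝ)).smul_const k).const_add l
    rw [one_smul] at this
    exact this
  · intro t
    rw [hexp]
    exact (hH t).exp
  · intro t
    rw [hexp]
    exact aux_log_exp _ (hH t)

theorem aux_decomp {n : ℕ} (K : Matrix (Fin n) (Fin n) ℂ) :
    ∃ a b : Matrix (Fin n) (Fin n) ℂ, aᴴ = a ∧ bᴴ = b ∧ K = a + Complex.I • b ∧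
      a = (1/2 : ℂ) • (K + Kᴴ) ∧ b = (-Complex.I/2 : ℂ) • (K - Kᴴ) := by
  refine ⟨_, _, ?_, ?_, ?_, rfl, rfl⟩
  · ext i j; simp; ring
  · ext i j; simp; ring
  · ext i j; simp; linear_combination (1/2 * (K i j - (starRingEnd ℂ) (K j i))) * Complex.I_mul_I

theorem aux_comm' {n : ℕ} (U : Matrix (Fin n) (Fin n) ℂ) (d : Fin n → ℝ)
    (u1 : star U * U = 1) (u2 : U * star U = 1)
    (Dlog : Matrix (Fin n) (Fin n) ℂ →L[ℂ] Matrix (Fin n) (Fin n) ℂ)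
    (hD : IsFDerivMatFun Real.log (U * diagonal (fun i => (d i : ℂ)) * star U) Dlog)
    (K : Matrix (Fin n) (Fin n) ℂ) :
    Dlog (K * (U * diagonal (fun i => (d i : ℂ)) * star U)
        - (U * diagonal (fun i => (d i : ℂ)) * star U) * K) =
      K * (U * diagonal (fun i => (Real.log (d i) : ℂ)) * star U)
        - (U * diagonal (fun i => (Real.log (d i) : ℂ)) * star U) * K := by
  obtain ⟨a, b, ha, hb, hK, -, -⟩ := aux_decomp K
  have ha' := aux_comm U d u1 u2 Dlog hD (Complex.I • a) (by
    rw [conjTranspose_smul, ha]; simp)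
  have hb' := aux_comm U d u1 u2 Dlog hD (Complex.I • b) (by
    rw [conjTranspose_smul, hb]; simp)
  generalize U * diagonal (fun i => (d i : ℂ)) * star U = x at *
  generalize U * diagonal (fun i => (Real.log (d i) : ℂ)) * star U = l at *
  have ha2 : Dlog (a * x - x * a) = a * l - l * a := by
    have h3 := congrArg (fun m => (-Complex.I) • m) ha'
    simp only [← map_smul] at h3
    simpa [smul_sub, smul_smul] using h3
  rw [hK]
  have e : ∀ m : Matrix (Fin n) (Fin n) ℂ, (a + Complex.I • b) * m - m * (a + Complex.I • b)
      = (a * m - m * a) + ((Complex.I • b) * m - m * (Complex.I • b)) := by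
    intro m; noncomm_ring
  rw [e, e, map_add, ha2, hb']

theorem aux_commute' {n : ℕ} (x l : Matrix (Fin n) (Fin n) ℂ) (hl : l.IsHermitian)
    (hxl : NormedSpace.exp l = x)
    (Dlog : Matrix (Fin n) (Fin n) ℂ →L[ℂ] Matrix (Fin n) (Fin n) ℂ)
    (hD : IsFDerivMatFun Real.log x Dlog)
    (k : Matrix (Fin n) (Fin n) ℂ) (hc : Commute l k) :
    Dlog (x * k) = k := by
  obtain ⟨a, b, ha, hb, hK, ha', hb'⟩ := aux_decomp k
  have hc2 : Commute l kᴴ := by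
    have := congrArg conjTranspose hc.eq
    rw [conjTranspose_mul, conjTranspose_mul, hl.eq] at this
    exact this.symm
  have h1 := aux_commute x l hl hxl Dlog hD a ha (by
    rw [ha']; exact (hc.add_right hc2).smul_right _)
  have h2 := aux_commute x l hl hxl Dlog hD b hb (by
    rw [hb']; exact (hc.sub_right hc2).smul_right _)
  rw [hK, mul_add, mul_smul_comm, map_add, map_smul, h1, h2]

/-- Daleckii-Krein formula for the logarithm. -/
theorem aux_DK {n : ℕ} (U : Matrix (Fin n) (Fin n) ℂ) (d : Fin n → ℝ) (hd : ∀ i, 0 < d i)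
    (u1 : star U * U = 1) (u2 : U * star U = 1)
    (Dlog : Matrix (Fin n) (Fin n) ℂ →L[ℂ] Matrix (Fin n) (Fin n) ℂ)
    (hD : IsFDerivMatFun Real.log (U * diagonal (fun i => (d i : ℂ)) * star U) Dlog)
    (g : Matrix (Fin n) (Fin n) ℂ) :
    Dlog (U * g * star U) = U * (Matrix.of fun i j =>
      ((if d i = d j then (d i)⁻¹ else (Real.log (d i) - Real.log (d j)) / (d i - d j) : ℝ) : ℂ)
        * g i j) * star U := by
  have conjmul : ∀ a b : Matrix (Fin n) (Fin n) ℂ,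
      (U * a * star U) * (U * b * star U) = U * (a * b) * star U := by
    intro a b
    calc _ = U * a * (star U * U) * b * star U := by simp only [Matrix.mul_assoc]
      _ = _ := by rw [u1, mul_one]; simp only [Matrix.mul_assoc]
  have hne : ∀ i, (d i : ℂ) ≠ 0 := fun i => by exact_mod_cast (hd i).ne'
  let k : Matrix (Fin n) (Fin n) ℂ := Matrix.of fun i j =>
    if d i = d j then ((d i : ℂ))⁻¹ * g i j else 0
  let K : Matrix (Fin n) (Fin n) ℂ := Matrix.of fun i j =>
    if d i = d j then 0 else ((d j : ℂ) - d i)⁻¹ * g i j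
  have hg : g = diagonal (fun i => (d i : ℂ)) * k +
      (K * diagonal (fun i => (d i : ℂ)) - diagonal (fun i => (d i : ℂ)) * K) := by
    ext i j
    simp only [Matrix.add_apply, Matrix.sub_apply, diagonal_mul, mul_diagonal, k, K, of_apply]
    split_ifs with hij
    · have := hne i
      field_simp; ring
    · have : (d j : ℂ) - d i ≠ 0 := by
        rw [sub_ne_zero]; exact_mod_cast Ne.symm hij
      field_simp; ring
  have hl : (U * diagonal (fun i => (Real.log (d i) : ℂ)) * star U).IsHermitian := by
    rw [star_eq_conjTranspose]
    apply isHermitian_mul_mul_conjTranspose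
    rw [IsHermitian, diagonal_conjTranspose]
    congr 1; ext i; simp
  have hxl : NormedSpace.exp (U * diagonal (fun i => (Real.log (d i) : ℂ)) * star U) =
      U * diagonal (fun i => (d i : ℂ)) * star U := by
    rw [aux_exp_conj U (fun i => Real.log (d i)) u1 u2]
    congr 3; ext i; rw [Real.exp_log (hd i)]
  have hk := aux_commute' _ _ hl hxl Dlog hD (U * k * star U) (by
    rw [Commute, SemiconjBy, conjmul, conjmul]
    congr 2
    ext i j
    simp only [diagonal_mul, mul_diagonal, k, of_apply]
    split_ifs with hij
    · rw [hij]; ring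
    · simp)
  have hK := aux_comm' U d u1 u2 Dlog hD (U * K * star U)
  rw [conjmul] at hk
  rw [conjmul, conjmul, conjmul, conjmul, ← sub_mul, ← mul_sub, ← sub_mul, ← mul_sub] at hK
  conv_lhs => rw [hg]
  rw [mul_add, add_mul, map_add, hk, hK, ← add_mul, ← mul_add]
  congr 2
  ext i j
  simp only [Matrix.add_apply, Matrix.sub_apply, diagonal_mul, mul_diagonal, k, K, of_apply]
  split_ifs with hij
  · simp
  · have h1 : (d j : ℂ) - d i ≠ 0 := by
      rw [sub_ne_zero]; exact_mod_cast Ne.symm hij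
    have h2 : (d i : ℂ) - d j ≠ 0 := by
      rw [sub_ne_zero]; exact_mod_cast hij
    push_cast
    field_simp; ring

theorem aux_inv {n : ℕ} (U : Matrix (Fin n) (Fin n) ℂ) (d : Fin n → ℝ)
    (u1 : star U * U = 1) (u2 : U * star U = 1) (t : ℝ)
    (hd : ∀ i j, t * d i + (1 - t) * d j ≠ 0) (g : Matrix (Fin n) (Fin n) ℂ) :
    Ring.inverse ((t : ℂ) • LinearMap.mulLeft ℂ (U * diagonal (fun i => (d i : ℂ)) * star U)
              + ((1 : ℂ) - (t : ℂ)) • LinearMap.mulRight ℂ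
                (U * diagonal (fun i => (d i : ℂ)) * star U)) (U * g * star U) =
      U * (Matrix.of fun i j => (((t * d i + (1 - t) * d j)⁻¹ : ℝ) : ℂ) * g i j) * star U := by
  have conjmul : ∀ a b : Matrix (Fin n) (Fin n) ℂ,
      (U * a * star U) * (U * b * star U) = U * (a * b) * star U := by
    intro a b
    calc _ = U * a * (star U * U) * b * star U := by simp only [Matrix.mul_assoc]
      _ = _ := by rw [u1, mul_one]; simp only [Matrix.mul_assoc]
  set T := ((t : ℂ) • LinearMap.mulLeft ℂ (U * diagonal (fun i => (d i : ℂ)) * star U)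
              + ((1 : ℂ) - (t : ℂ)) • LinearMap.mulRight ℂ
                (U * diagonal (fun i => (d i : ℂ)) * star U)) with hT
  have hTapp : ∀ g : Matrix (Fin n) (Fin n) ℂ, T (U * g * star U) =
      U * (Matrix.of fun i j => (((t * d i + (1 - t) * d j) : ℝ) : ℂ) * g i j) * star U := by
    intro g
    simp only [hT, LinearMap.add_apply, LinearMap.smul_apply, LinearMap.mulLeft_apply,
      LinearMap.mulRight_apply, conjmul]
    have e : ∀ (c : ℂ) (m : Matrix (Fin n) (Fin n) ℂ),
        c • (U * m * star U) = U * (c • m) * star U := by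
      intro c m; rw [mul_smul_comm, smul_mul_assoc]
    rw [e, e, ← add_mul, ← mul_add]
    congr 2
    ext i j
    simp only [Matrix.add_apply, Matrix.smul_apply, diagonal_mul, mul_diagonal, of_apply,
      smul_eq_mul]
    push_cast; ring
  have hinv : ∀ g : Matrix (Fin n) (Fin n) ℂ, T (U * (Matrix.of fun i j =>
      (((t * d i + (1 - t) * d j)⁻¹ : ℝ) : ℂ) * g i j) * star U) = U * g * star U := by
    intro g
    rw [hTapp]
    congr 2
    ext i j
    simp only [of_apply]
    rw [← mul_assoc, ← Complex.ofReal_mul, mul_inv_cancel₀ (hd i j)]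
    simp
  have hsurj : Function.Surjective T := by
    intro m
    refine ⟨_, (hinv (star U * m * U)).trans ?_⟩
    calc _ = (U * star U) * m * (U * star U) := by simp only [Matrix.mul_assoc]
      _ = m := by rw [u2]; simp
  have hunit : IsUnit T := by
    rw [Module.End.isUnit_iff]
    exact ⟨LinearMap.injective_iff_surjective.2 hsurj, hsurj⟩
  have h3 := Ring.inverse_mul_cancel T hunit
  conv_lhs => rw [← hinv g]
  rw [← Module.End.mul_apply, h3, Module.End.one_apply]

theorem aux_trace {n : ℕ} (U g : Matrix (Fin n) (Fin n) ℂ) (c : Fin n → Fin n → ℝ)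
    (u1 : star U * U = 1) :
    (Matrix.trace ((U * g * star U)ᴴ *
      (U * (Matrix.of fun i j => ((c i j : ℝ) : ℂ) * g i j) * star U))).re =
      ∑ j, ∑ i, c i j * Complex.normSq (g i j) := by
  set m : Matrix (Fin n) (Fin n) ℂ := Matrix.of fun i j => ((c i j : ℝ) : ℂ) * g i j with hm
  have : Matrix.trace ((U * g * star U)ᴴ * (U * m * star U)) = Matrix.trace (gᴴ * m) := by
    rw [← star_eq_conjTranspose, star_mul, star_mul, star_star]
    calc _ = Matrix.trace (U * (star g * (star U * U) * m * star U)) := by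
          simp only [Matrix.mul_assoc]
      _ = Matrix.trace (star g * (star U * U) * m * (star U * U)) := by
          rw [Matrix.trace_mul_comm]; simp only [Matrix.mul_assoc]
      _ = _ := by rw [u1, mul_one, mul_one]; rfl
  rw [this]
  simp only [Matrix.trace, Matrix.diag, Matrix.mul_apply, Complex.re_sum, conjTranspose_apply, hm,
    of_apply]
  refine Finset.sum_congr rfl fun j _ => Finset.sum_congr rfl fun i _ => ?_
  simp [Complex.normSq_apply]
  ring

/-- For positive definite `x` and arbitrary `h`,
`Tr (h* ⬝ D log(x) h) = ∫₀¹ Tr (h* ⬝ (λ Lₓ + (1−λ) Rₓ)⁻¹ h) dλ`, where `Lₓ` and `Rₓ` are left and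
right multiplication by `x` and `D log(x)` is the Fréchet differential of the matrix
logarithm at `x`. -/
theorem trace_fderiv_log_eq_integral {n : ℕ}
    (x : Matrix (Fin n) (Fin n) ℂ) (hx : x.PosDef)
    (h : Matrix (Fin n) (Fin n) ℂ)
    (Dlog : Matrix (Fin n) (Fin n) ℂ →L[ℂ] Matrix (Fin n) (Fin n) ℂ)
    (hD : IsFDerivMatFun Real.log x Dlog) :
    (Matrix.trace (hᴴ * Dlog h)).re
      = ∫ lam in (0 : ℝ)..1,
          (Matrix.trace (hᴴ *
            (Ring.inverse ((lam : ℂ) • LinearMap.mulLeft ℂ x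
              + ((1 : ℂ) - (lam : ℂ)) • LinearMap.mulRight ℂ x) h))).re := by
  have hs := hx.1.spectral_theorem
  rw [Unitary.conjStarAlgAut_apply] at hs
  have u1 := Unitary.coe_star_mul_self hx.1.eigenvectorUnitary
  have u2 := mul_eq_one_comm.1 u1
  have hd : ∀ i, 0 < hx.1.eigenvalues i := hx.eigenvalues_pos
  replace hs : x = _ * diagonal (fun i => (hx.1.eigenvalues i : ℂ)) * _ := hs
  generalize hx.1.eigenvalues = d at *
  generalize (hx.1.eigenvectorUnitary : Matrix (Fin n) (Fin n) ℂ) = U at *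
  clear hx
  subst hs
  obtain ⟨g, rfl⟩ : ∃ g, h = U * g * star U := by
    refine ⟨star U * h * U, ?_⟩
    calc h = (U * star U) * h * (U * star U) := by rw [u2]; simp
      _ = _ := by simp only [Matrix.mul_assoc]
  have hpos : ∀ t ∈ Set.uIcc (0:ℝ) 1, ∀ i j, 0 < t * d i + (1 - t) * d j := by
    intro t ht i j
    rw [Set.uIcc_of_le zero_le_one] at ht
    rcases ht.1.eq_or_lt with h0 | h0
    · rw [← h0]; simpa using hd j
    · have := mul_pos h0 (hd i)
      have := mul_nonneg (sub_nonneg.2 ht.2) (hd j).le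
      linarith
  rw [aux_DK U d hd u1 u2 Dlog hD g, aux_trace U g _ u1]
  have hcongr : Set.EqOn (fun lam : ℝ => (Matrix.trace ((U * g * star U)ᴴ *
            (Ring.inverse ((lam : ℂ) • LinearMap.mulLeft ℂ
                (U * diagonal (fun i => (d i : ℂ)) * star U)
              + ((1 : ℂ) - (lam : ℂ)) • LinearMap.mulRight ℂ
                (U * diagonal (fun i => (d i : ℂ)) * star U)) (U * g * star U)))).re)
      (fun lam : ℝ => ∑ j, ∑ i, (lam * d i + (1 - lam) * d j)⁻¹ * Complex.normSq (g i j))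
      (Set.uIcc (0:ℝ) 1) := by
    intro t ht
    dsimp only
    rw [aux_inv U d u1 u2 t (fun i j => (hpos t ht i j).ne') g, aux_trace U g _ u1]
  have hint : ∀ i j, IntervalIntegrable
      (fun lam : ℝ => (lam * d i + (1 - lam) * d j)⁻¹ * Complex.normSq (g i j))
      MeasureTheory.volume 0 1 := by
    intro i j
    apply ContinuousOn.intervalIntegrable
    refine ContinuousOn.mul (ContinuousOn.inv₀ (by fun_prop) ?_) continuousOn_const
    intro t ht; exact (hpos t ht i j).ne'
  rw [intervalIntegral.integral_congr hcongr, intervalIntegral.integral_finsetSum]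
  · refine Finset.sum_congr rfl fun j _ => ?_
    rw [intervalIntegral.integral_finsetSum (fun i _ => hint i j)]
    refine Finset.sum_congr rfl fun i _ => ?_
    rw [intervalIntegral.integral_mul_const, aux_scalar _ _ (hd i) (hd j)]
  · intro j _
    have := IntervalIntegrable.sum Finset.univ (fun i _ => hint i j)
    have e : (∑ i, fun lam : ℝ => (lam * d i + (1 - lam) * d j)⁻¹ * Complex.normSq (g i j)) =
        fun lam : ℝ => ∑ i, (lam * d i + (1 - lam) * d j)⁻¹ * Complex.normSq (g i j) := by
      ext t; simp
    rw [e] at this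
    exact this
end

section
/- Let H₁ and H₂ be finite-dimensional complex Hilbert spaces, H = H₁ ⊗ H₂, d₂ = dim H₂, and let f : (0,∞) → ℝ be a matrix entropy. Then for every positive definite operator ρ on H and every self-adjoint operator h on H, Tr₁( h₁* · Df'(ρ₁) h₁ ) ≤ d₂ · Tr₁₂( h* · Df'(d₂ρ) h ), where ρ₁ = Tr₂ ρ and h₁ = Tr₂ h are the partial traces over H₂. -/
open Matrix
open scoped ComplexOrder

attribute [local instance] Matrix.normedAddCommGroup Matrix.normedSpace

section
open Filter Topology


open scoped Matrix.Norms.L2Operator in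
theorem tendsto_cfc_posdef {m : Type*} [Fintype m] [DecidableEq m] (g : ℝ → ℝ)
    (hg : ContinuousOn g (Set.Ioi 0)) (x : Matrix m m ℂ) (hx : IsSelfAdjoint x)
    (hs : spectrum ℝ x ⊆ Set.Ioi 0) :
    Tendsto (fun y : Matrix m m ℂ => cfc g y) (𝓝[{y : Matrix m m ℂ | IsSelfAdjoint y}] x)
      (𝓝 (cfc g x)) := by
  obtain ⟨S, ⟨hS₁, hS₂⟩, hS₃⟩ :=
      (spectrum.isCompact (𝕜 := ℝ) x).nhdsSet_basis_isCompact.mem_iff.mp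
        (isOpen_Ioi.mem_nhdsSet.mpr hs)
  have h1 : ∀ᶠ y in 𝓝 x, spectrum ℝ y ⊆ S :=
    (upperHemicontinuous_spectrum ℝ (Matrix m m ℂ)).upperHemicontinuousAt x _ hS₁ |>.mono
      fun _ ↦ subset_of_mem_nhdsSet
  exact Filter.Tendsto.cfc (p := IsSelfAdjoint) hS₂ g (tendsto_id.mono_left nhdsWithin_le_nhds)
    (h1.filter_mono nhdsWithin_le_nhds) self_mem_nhdsWithin
    (subset_of_mem_nhdsSet hS₁) hx (hg.mono hS₃)

theorem cfc_sub_formula {m : Type*} [Fintype m] [DecidableEq m] (g : ℝ → ℝ)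
    (x : Matrix m m ℂ) (hx : IsSelfAdjoint x) (y : Matrix m m ℂ) (hy : IsSelfAdjoint y) :
    cfc g y - cfc g x = ∑ s ∈ (finite_real_spectrum (A := x)).toFinset,
      cfc (Pi.single s 1) x * (y - x) * cfc (dslope g s) y := by
  have hc : ∀ (u : ℝ → ℝ) (z : Matrix m m ℂ), ContinuousOn u (spectrum ℝ z) :=
    fun u z => (finite_real_spectrum (A := z)).continuousOn u
  have h1 : ∑ s ∈ (finite_real_spectrum (A := x)).toFinset, cfc (Pi.single s (1:ℝ)) x = 1 := by
    rw [← cfc_sum _ _ _ (fun i _ => hc _ _), ← cfc_const_one ℝ x]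
    apply cfc_congr
    intro t ht
    simp [Finset.sum_apply, Pi.single_apply, ht]
  have h4 : ∀ (u : ℝ → ℝ) (s : ℝ),
      cfc (Pi.single s (1:ℝ)) x * cfc u x = u s • cfc (Pi.single s (1:ℝ)) x := by
    intro u s
    rw [← cfc_mul _ _ _ (hc _ _) (hc _ _), ← cfc_smul _ _ _ (hc _ _)]
    apply cfc_congr
    intro t ht
    by_cases h : t = s
    · subst h; simp
    · simp [h]
  have h2 : ∀ s : ℝ, cfc (Pi.single s (1:ℝ)) x * x = s • cfc (Pi.single s (1:ℝ)) x := by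
    intro s
    have := h4 id s
    rwa [cfc_id ℝ x] at this
  have h3 : ∀ s : ℝ, y * cfc (dslope g s) y - s • cfc (dslope g s) y
      = cfc g y - g s • (1 : Matrix m m ℂ) := by
    intro s
    have e1 : y * cfc (dslope g s) y = cfc (fun t => t * dslope g s t) y := by
      rw [cfc_mul _ _ _ (hc _ _) (hc _ _), cfc_id' ℝ y]
    have e2 : g s • (1 : Matrix m m ℂ) = cfc (fun _ => g s) y := by
      rw [cfc_const _ _, Algebra.algebraMap_eq_smul_one]
    rw [e1, e2, ← cfc_smul _ _ _ (hc _ _), ← cfc_sub _ _ _ (hc _ _) (hc _ _),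
      ← cfc_sub _ _ _ (hc _ _) (hc _ _)]
    apply cfc_congr
    intro t ht
    have := sub_smul_dslope g s t
    simp only [smul_eq_mul] at this ⊢
    rw [← this]; ring
  have h5 : ∀ s : ℝ, cfc (Pi.single s (1:ℝ)) x * (y - x) * cfc (dslope g s) y
      = cfc (Pi.single s (1:ℝ)) x * (cfc g y - cfc g x) := by
    intro s
    rw [mul_sub, mul_sub, h2, h4, sub_mul, mul_assoc, smul_mul_assoc, ← mul_smul_comm, ← mul_sub,
      h3, mul_sub, mul_smul_comm, mul_one]
  rw [Finset.sum_congr rfl (fun s _ => h5 s), ← Finset.sum_mul, h1, one_mul]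

open scoped Matrix.Norms.L2Operator in
theorem exists_fderiv_cfc {m : Type*} [Fintype m] [DecidableEq m] (g : ℝ → ℝ)
    (hg : DifferentiableOn ℝ g (Set.Ioi 0)) (x : Matrix m m ℂ) (hx : IsSelfAdjoint x)
    (hs : spectrum ℝ x ⊆ Set.Ioi 0) :
    ∃ D : Matrix m m ℂ →L[ℂ] Matrix m m ℂ,
      HasFDerivWithinAt (fun y : Matrix m m ℂ => cfc g y) (D.restrictScalars ℝ)
        {y : Matrix m m ℂ | IsSelfAdjoint y} x := by
  let P : ℝ → Matrix m m ℂ := fun s => cfc (Pi.single s 1) x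
  let S := (finite_real_spectrum (A := x)).toFinset
  let D : Matrix m m ℂ →L[ℂ] Matrix m m ℂ := ∑ s ∈ S,
    (ContinuousLinearMap.mul ℂ (Matrix m m ℂ)).flip (cfc (dslope g s) x) ∘L
      (ContinuousLinearMap.mul ℂ (Matrix m m ℂ) (P s))
  have hDa : ∀ k, D k = ∑ s ∈ S, P s * k * cfc (dslope g s) x := by
    intro k
    simp [D]
  refine ⟨D, ?_⟩
  rw [hasFDerivWithinAt_iff_isLittleO]
  have key : (fun y => ∑ s ∈ S, P s * (y - x) * (cfc (dslope g s) y - cfc (dslope g s) x))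
      =o[𝓝[{y : Matrix m m ℂ | IsSelfAdjoint y}] x] fun y => y - x := by
    apply Asymptotics.IsLittleO.fun_sum
    intro s hsS
    have hs0 : s ∈ Set.Ioi (0:ℝ) := hs (by simpa [S] using hsS)
    have hcont : ContinuousOn (dslope g s) (Set.Ioi 0) := by
      rw [continuousOn_dslope (isOpen_Ioi.mem_nhds hs0)]
      exact ⟨hg.continuousOn, (hg s hs0).differentiableAt (isOpen_Ioi.mem_nhds hs0)⟩
    have ht := tendsto_cfc_posdef _ hcont x hx hs
    have h1 : (fun y => cfc (dslope g s) y - cfc (dslope g s) x)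
        =o[𝓝[{y : Matrix m m ℂ | IsSelfAdjoint y}] x] fun y => (1:ℝ) := by
      rw [Asymptotics.isLittleO_one_iff]
      exact tendsto_sub_nhds_zero_iff.mpr ht
    have h2 : (fun y : Matrix m m ℂ => P s * (y - x))
        =O[𝓝[{y : Matrix m m ℂ | IsSelfAdjoint y}] x] fun y => ‖y - x‖ := by
      refine Asymptotics.IsBigO.of_bound ‖P s‖ (Eventually.of_forall fun y => ?_)
      simpa using norm_mul_le (P s) (y - x)
    have := h2.mul_isLittleO h1
    simp only [mul_one] at this
    exact this.of_norm_right
  refine key.congr' ?_ (EventuallyEq.refl _ _)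
  filter_upwards [self_mem_nhdsWithin] with y hy
  rw [cfc_sub_formula g x hx y hy]
  simp [hDa, mul_sub, S, P]

end

theorem matFun_eq_cfc {m : Type*} [Fintype m] [DecidableEq m] (f : ℝ → ℝ)
    (x : Matrix m m ℂ) : matFun f x = cfc f x := by
  unfold matFun
  split_ifs with hx
  · rw [hx.cfc_eq f]
    rfl
  · exact (cfc_apply_of_not_predicate x hx).symm

theorem exists_isFDerivMatFun {m : Type*} [Fintype m] [DecidableEq m] (g : ℝ → ℝ)
    (hg : DifferentiableOn ℝ g (Set.Ioi 0)) (x : Matrix m m ℂ) (hx : x.PosDef) :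
    ∃ D, IsFDerivMatFun g x D := by
  have hs : spectrum ℝ x ⊆ Set.Ioi 0 := by
    rw [hx.1.spectrum_real_eq_range_eigenvalues]
    rintro _ ⟨i, rfl⟩
    exact hx.eigenvalues_pos i
  obtain ⟨D, hD⟩ := exists_fderiv_cfc g hg x hx.1 hs
  refine ⟨D, ?_⟩
  unfold IsFDerivMatFun
  rw [show matFun g = fun y : Matrix m m ℂ => cfc g y from funext (matFun_eq_cfc g)]
  exact ⟨HasFDerivAtFilter.isLittleOTVS hD⟩

theorem continuous_starAlgHom {m n : Type*} [Fintype m] [DecidableEq m] [Fintype n] [DecidableEq n]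
    (φ : Matrix m m ℂ →⋆ₐ[ℂ] Matrix n n ℂ) : Continuous φ :=
  φ.toAlgHom.toLinearMap.continuous_of_finiteDimensional

theorem map_matFun {m n : Type*} [Fintype m] [DecidableEq m] [Fintype n] [DecidableEq n]
    (φ : Matrix m m ℂ →⋆ₐ[ℂ] Matrix n n ℂ) (f : ℝ → ℝ) (x : Matrix m m ℂ) (hx : x.IsHermitian) :
    matFun f (φ x) = φ (matFun f x) := by
  have hx' : IsSelfAdjoint x := hx
  rw [matFun_eq_cfc, matFun_eq_cfc]
  exact (StarAlgHom.map_cfc φ f x ((finite_real_spectrum (A := x)).continuousOn f)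
    (continuous_starAlgHom φ) hx' (hx'.map φ)).symm

theorem isFDerivMatFun_line {m : Type*} [Fintype m] [DecidableEq m] (f : ℝ → ℝ)
    (x h : Matrix m m ℂ) (hx : x.IsHermitian) (hh : h.IsHermitian)
    (D : Matrix m m ℂ →L[ℂ] Matrix m m ℂ) (hD : IsFDerivMatFun f x D) :
    HasDerivAt (fun t : ℝ => matFun f (x + t • h)) (D h) 0 := by
  have h1 : HasDerivAt (fun t : ℝ => x + t • h) h 0 := by
    have h0 := ((hasDerivAt_id (0:ℝ)).smul_const h).const_add x
    rw [one_smul] at h0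
    exact h0
  have h2 : HasFDerivWithinAt (matFun f) (D.restrictScalars ℝ) {y : Matrix m m ℂ | y.IsHermitian}
      (x + (0:ℝ) • h) := by
    rw [zero_smul, add_zero]
    exact hD
  have := h2.comp_hasDerivWithinAt (s := Set.univ) (0:ℝ) h1.hasDerivWithinAt (fun t _ => by
    have ht : IsSelfAdjoint (t • h) := IsSelfAdjoint.smul (IsSelfAdjoint.all t) hh
    exact hx.add ht)
  rw [hasDerivWithinAt_univ] at this
  exact this

theorem isFDerivMatFun_map {m n : Type*} [Fintype m] [DecidableEq m] [Fintype n] [DecidableEq n]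
    (φ : Matrix m m ℂ →⋆ₐ[ℂ] Matrix n n ℂ) (f : ℝ → ℝ) (x h : Matrix m m ℂ)
    (hx : x.IsHermitian) (hh : h.IsHermitian)
    (D : Matrix m m ℂ →L[ℂ] Matrix m m ℂ) (hD : IsFDerivMatFun f x D)
    (D' : Matrix n n ℂ →L[ℂ] Matrix n n ℂ) (hD' : IsFDerivMatFun f (φ x) D') :
    D' (φ h) = φ (D h) := by
  have hx' : (φ x).IsHermitian := IsSelfAdjoint.map (f := φ) hx
  have hh' : (φ h).IsHermitian := IsSelfAdjoint.map (f := φ) hh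
  have e1 := isFDerivMatFun_line f (φ x) (φ h) hx' hh' D' hD'
  have e2 := isFDerivMatFun_line f x h hx hh D hD
  let L : Matrix m m ℂ →L[ℝ] Matrix n n ℂ :=
    (LinearMap.toContinuousLinearMap φ.toAlgHom.toLinearMap).restrictScalars ℝ
  have e3 := (L.hasFDerivAt (x := matFun f (x + (0:ℝ) • h))).comp_hasDerivAt (0:ℝ) e2
  have e4 : (fun t : ℝ => matFun f (φ x + t • φ h)) = L ∘ fun t : ℝ => matFun f (x + t • h) := by
    funext t
    have ht : IsSelfAdjoint (t • h) := IsSelfAdjoint.smul (IsSelfAdjoint.all t) hh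
    have := map_matFun φ f (x + t • h) (hx.add ht)
    rw [map_add, show φ (t • h) = t • φ h from L.map_smul t h] at this
    exact this
  rw [e4] at e1
  exact e1.unique e3

theorem posDef_map {m n : Type*} [Fintype m] [DecidableEq m] [Fintype n] [DecidableEq n]
    (φ : Matrix m m ℂ →⋆ₐ[ℂ] Matrix n n ℂ) (x : Matrix m m ℂ) (hx : x.PosDef) :
    (φ x).PosDef := by
  obtain ⟨B, rfl⟩ : ∃ B : Matrix m m ℂ, x = Bᴴ * B := by
    open scoped MatrixOrder Matrix.Norms.L2Operator in
    exact CStarAlgebra.nonneg_iff_eq_star_mul_self.mp hx.posSemidef.nonneg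
  have : (φ (Bᴴ * B)).PosSemidef := by
    rw [map_mul, ← star_eq_conjTranspose, map_star]
    exact Matrix.posSemidef_conjTranspose_mul_self _
  exact this.posDef_iff_isUnit.mpr (hx.isUnit.map φ)

/-- Reindexing followed by conjugation with a diagonal sign matrix. -/
noncomputable def signConj {m n : Type*} [Fintype m] [DecidableEq m] [Fintype n] [DecidableEq n]
    (e : n ≃ m) (c : n → ℤˣ) : Matrix m m ℂ →⋆ₐ[ℂ] Matrix n n ℂ where
  toFun A := Matrix.of fun p q => ((c p : ℤ) : ℂ) * A (e p) (e q) * ((c q : ℤ) : ℂ)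
  map_one' := by
    ext p q
    by_cases h : p = q
    · subst h
      rcases Int.units_eq_one_or (c p) with h | h <;> simp [h]
    · simp [h, Matrix.one_apply]
  map_mul' A B := by
    ext p q
    simp only [Matrix.of_apply, Matrix.mul_apply]
    rw [← e.sum_comp, Finset.mul_sum, Finset.sum_mul]
    refine Finset.sum_congr rfl fun r _ => ?_
    rcases Int.units_eq_one_or (c r) with h | h <;> simp [h] <;> ring
  map_zero' := by ext p q; simp
  map_add' A B := by ext p q; simp; ring
  commutes' r := by
    ext p q
    by_cases h : p = q
    · subst h
      rcases Int.units_eq_one_or (c p) with h | h <;> simp [h, Matrix.algebraMap_matrix_apply]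
    · simp [h, Matrix.algebraMap_matrix_apply]
  map_star' A := by
    ext p q
    simp [Matrix.star_apply]
    ring

theorem signConj_apply {m n : Type*} [Fintype m] [DecidableEq m] [Fintype n] [DecidableEq n]
    (e : n ≃ m) (c : n → ℤˣ) (A : Matrix m m ℂ) (p q : n) :
    signConj e c A p q = ((c p : ℤ) : ℂ) * A (e p) (e q) * ((c q : ℤ) : ℂ) := rfl

theorem trace_signConj {m n : Type*} [Fintype m] [DecidableEq m] [Fintype n] [DecidableEq n]
    (e : n ≃ m) (c : n → ℤˣ) (A : Matrix m m ℂ) : (signConj e c A).trace = A.trace := by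
  simp only [Matrix.trace, Matrix.diag_apply, signConj_apply]
  rw [← e.sum_comp]
  refine Finset.sum_congr rfl fun p _ => ?_
  rcases Int.units_eq_one_or (c p) with h | h <;> simp [h]

/-- The embedding `A ↦ A ⊗ 1`, reindexed. -/
noncomputable def ampl {ι₁ ι₂ n : Type*} [Fintype ι₁] [DecidableEq ι₁] [Fintype ι₂] [DecidableEq ι₂]
    [Fintype n] [DecidableEq n] (e : n ≃ ι₁ × ι₂) : Matrix ι₁ ι₁ ℂ →⋆ₐ[ℂ] Matrix n n ℂ where
  toFun A := Matrix.of fun p q => if (e p).2 = (e q).2 then A (e p).1 (e q).1 else 0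
  map_one' := by
    ext p q
    by_cases h : p = q
    · subst h; simp
    · have : e p ≠ e q := fun h' => h (e.injective h')
      simp only [Matrix.of_apply, Matrix.one_apply, h, if_false]
      split_ifs with h1 h2
      · exact absurd (Prod.ext h2 h1) this
      · rfl
      · rfl
  map_mul' A B := by
    ext p q
    simp only [Matrix.of_apply, Matrix.mul_apply]
    rw [← e.symm.sum_comp, Fintype.sum_prod_type]
    simp only [Equiv.apply_symm_apply, ite_mul, zero_mul, mul_ite, mul_zero]
    by_cases h : (e p).2 = (e q).2 <;> simp [h]
  map_zero' := by ext p q; simp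
  map_add' A B := by ext p q; simp; split_ifs <;> simp
  commutes' r := by
    ext p q
    by_cases h : p = q
    · subst h; simp [Matrix.algebraMap_matrix_apply]
    · have : e p ≠ e q := fun h' => h (e.injective h')
      simp only [Matrix.of_apply, Matrix.algebraMap_matrix_apply, h, if_false]
      split_ifs with h1 h2
      · exact absurd (Prod.ext h2 h1) this
      · rfl
      · rfl
  map_star' A := by
    ext p q
    simp only [Matrix.of_apply, Matrix.star_apply, eq_comm]
    split_ifs <;> simp_all

theorem ampl_apply {ι₁ ι₂ n : Type*} [Fintype ι₁] [DecidableEq ι₁] [Fintype ι₂] [DecidableEq ι₂]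
    [Fintype n] [DecidableEq n] (e : n ≃ ι₁ × ι₂) (A : Matrix ι₁ ι₁ ℂ) (p q : n) :
    ampl e A p q = if (e p).2 = (e q).2 then A (e p).1 (e q).1 else 0 := rfl

theorem trace_ampl {ι₁ ι₂ n : Type*} [Fintype ι₁] [DecidableEq ι₁] [Fintype ι₂] [DecidableEq ι₂]
    [Fintype n] [DecidableEq n] (e : n ≃ ι₁ × ι₂) (A : Matrix ι₁ ι₁ ℂ) :
    (ampl e A).trace = (Fintype.card ι₂ : ℂ) * A.trace := by
  simp only [Matrix.trace, Matrix.diag_apply, ampl_apply]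
  rw [← e.symm.sum_comp, Fintype.sum_prod_type]
  simp [Finset.mul_sum]

theorem exists_transitive_family (ι : Type*) [Fintype ι] [Nonempty ι] :
    ∃ τ : ι → Equiv.Perm ι, ∀ k, Function.Bijective fun a => τ a k := by
  have e := Fintype.equivFin ι
  have : NeZero (Fintype.card ι) := ⟨Fintype.card_ne_zero⟩
  refine ⟨fun a => e.trans ((Equiv.addLeft (e a)).trans e.symm), fun k => ?_⟩
  exact (e.trans ((Equiv.addRight (e k)).trans e.symm)).bijective

theorem sum_sign_mul {ι : Type*} [Fintype ι] [DecidableEq ι] (k l : ι) (h : k ≠ l) :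
    ∑ s : ι → ℤˣ, ((s k : ℤ) : ℂ) * ((s l : ℤ) : ℂ) = 0 := by
  let g : ι → ℤˣ := Pi.mulSingle k (-1)
  have := Equiv.sum_comp (Equiv.mulLeft g) (fun s : ι → ℤˣ => ((s k : ℤ) : ℂ) * ((s l : ℤ) : ℂ))
  simp [g, h.symm, Finset.sum_neg_distrib] at this
  exact self_eq_neg.mp this.symm

theorem sum_signConj {ι₁ ι₂ n : Type*} [Fintype ι₁] [DecidableEq ι₁] [Fintype ι₂] [DecidableEq ι₂]
    [Fintype n] [DecidableEq n] (e : n ≃ ι₁ × ι₂) (τ : ι₂ → Equiv.Perm ι₂)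
    (hτ : ∀ k, Function.Bijective fun a => τ a k) (A : Matrix (ι₁ × ι₂) (ι₁ × ι₂) ℂ) :
    ∑ w : (ι₂ → ℤˣ) × ι₂,
      signConj (e.trans ((Equiv.refl ι₁).prodCongr (τ w.2))) (fun p => w.1 (e p).2) A
    = (Fintype.card (ι₂ → ℤˣ) : ℂ) • ampl e (ptrace A) := by
  ext p q
  rw [Matrix.sum_apply, Matrix.smul_apply, ampl_apply, Fintype.sum_prod_type_right]
  simp only [signConj_apply, Equiv.trans_apply, Equiv.prodCongr_apply, Equiv.coe_refl,
    Prod.map_apply']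
  have hr : ∀ a (s : ι₂ → ℤˣ), ((s (e p).2 : ℤ) : ℂ) *
      A (id (e p).1, τ a (e p).2) (id (e q).1, τ a (e q).2) * ((s (e q).2 : ℤ) : ℂ)
      = A ((e p).1, τ a (e p).2) ((e q).1, τ a (e q).2) *
        (((s (e p).2 : ℤ) : ℂ) * ((s (e q).2 : ℤ) : ℂ)) := by
    intro a s
    simp only [id]
    ring
  simp only [hr, ← Finset.mul_sum]
  split_ifs with h
  · rw [← h]
    have h1 : ∀ s : ι₂ → ℤˣ, ((s (e p).2 : ℤ) : ℂ) * ((s (e p).2 : ℤ) : ℂ) = 1 := by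
      intro s
      rcases Int.units_eq_one_or (s (e p).2) with h | h <;> simp [h]
    simp only [h1, Finset.sum_const, Finset.card_univ, nsmul_eq_mul, mul_one, ← Finset.sum_mul]
    rw [smul_eq_mul, mul_comm]
    congr 1
    exact (hτ (e p).2).sum_comp (fun k => A ((e p).1, k) ((e q).1, k))
  · rw [sum_sign_mul _ _ h]
    simp

theorem ptrace_isHermitian {ι₁ ι₂ : Type*} [Fintype ι₂]
    (A : Matrix (ι₁ × ι₂) (ι₁ × ι₂) ℂ) (hA : A.IsHermitian) : (ptrace A).IsHermitian := by
  ext i j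
  simp only [ptrace, Matrix.conjTranspose_apply, Matrix.of_apply, star_sum]
  exact Finset.sum_congr rfl fun k _ => hA.apply _ _

/-- If `f` is a matrix entropy then for every positive definite `ρ` and
self-adjoint `h` on `H = H₁ ⊗ H₂` one has
`Tr₁ (h₁* ⬝ Df'(ρ₁) h₁) ≤ d₂ · Tr₁₂ (h* ⬝ Df'(d₂ρ) h)`, where `ρ₁ = Tr₂ ρ`, `h₁ = Tr₂ h`
and `d₂ = dim H₂`. -/
theorem matrixEntropy_partialTrace_fderiv_ineq
    {ι₁ ι₂ : Type*} [Fintype ι₁] [DecidableEq ι₁] [Fintype ι₂] [DecidableEq ι₂]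
    (f f' : ℝ → ℝ) (hf : IsMatrixEntropy f f')
    (d₂ : ℕ) (hd₂ : d₂ = Fintype.card ι₂)
    (ρ : Matrix (ι₁ × ι₂) (ι₁ × ι₂) ℂ) (hρ : ρ.PosDef)
    (h : Matrix (ι₁ × ι₂) (ι₁ × ι₂) ℂ) (hh : h.IsHermitian)
    (D : Matrix (ι₁ × ι₂) (ι₁ × ι₂) ℂ →L[ℂ] Matrix (ι₁ × ι₂) (ι₁ × ι₂) ℂ)
    (hD : IsFDerivMatFun f' ((d₂ : ℂ) • ρ) D)
    (D₁ : Matrix ι₁ ι₁ ℂ →L[ℂ] Matrix ι₁ ι₁ ℂ)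
    (hD₁ : IsFDerivMatFun f' (ptrace ρ) D₁) :
    (Matrix.trace ((ptrace h)ᴴ * D₁ (ptrace h))).re
      ≤ (d₂ : ℝ) * (Matrix.trace (hᴴ * D h)).re := by
  subst hd₂
  rcases isEmpty_or_nonempty ι₂ with hE | hE
  · have : ptrace h = 0 := by ext i j; simp [ptrace]
    simp [this]
  obtain ⟨hf2, hder, hconv⟩ := hf
  have hdiff : DifferentiableOn ℝ f' (Set.Ioi 0) := by
    have h1 : ContDiffOn ℝ 1 (deriv f) (Set.Ioi 0) :=
      ((contDiffOn_succ_iff_deriv_of_isOpen (n := 1) isOpen_Ioi).mp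
        (by simpa [one_add_one_eq_two] using hf2)).2.2
    exact (h1.differentiableOn one_ne_zero).congr fun t ht => ((hder t ht).deriv).symm
  set d := Fintype.card ι₂ with hd
  have hdpos : 0 < d := Fintype.card_pos
  have hdR : (0:ℝ) < d := by exact_mod_cast hdpos
  have hdC : (d : ℂ) ≠ 0 := by exact_mod_cast hdpos.ne'
  let e : Fin (Fintype.card (ι₁ × ι₂)) ≃ ι₁ × ι₂ := (Fintype.equivFin (ι₁ × ι₂)).symm
  obtain ⟨τ, hτ⟩ := exists_transitive_family ι₂
  let φ : (ι₂ → ℤˣ) × ι₂ → (Matrix (ι₁ × ι₂) (ι₁ × ι₂) ℂ →⋆ₐ[ℂ] Matrix (Fin _) (Fin _) ℂ) :=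
    fun w => signConj (e.trans ((Equiv.refl ι₁).prodCongr (τ w.2))) (fun p => w.1 (e p).2)
  have hex : ∀ x : Matrix (Fin (Fintype.card (ι₁ × ι₂))) (Fin (Fintype.card (ι₁ × ι₂))) ℂ,
      ∃ E, x.PosDef → IsFDerivMatFun f' x E := by
    intro x
    by_cases hx : x.PosDef
    · obtain ⟨E, hE⟩ := exists_isFDerivMatFun f' hdiff x hx
      exact ⟨E, fun _ => hE⟩
    · exact ⟨0, fun h => absurd h hx⟩
  choose E hE using hex
  have hcv := hconv _ E hE
  have hdρ : ((d : ℂ) • ρ).PosDef := hρ.smul (by exact_mod_cast hdpos)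
  let N : ℝ := Fintype.card (ι₂ → ℤˣ)
  have hN : 0 < N := by
    have : 0 < Fintype.card (ι₂ → ℤˣ) := Fintype.card_pos
    exact Nat.cast_pos.mpr this
  let c : ℝ := (N * d)⁻¹
  have hc : 0 < c := by positivity
  have hcard : ∑ w : (ι₂ → ℤˣ) × ι₂, c = 1 := by
    rw [Finset.sum_const, Finset.card_univ, Fintype.card_prod, nsmul_eq_mul]
    push_cast
    exact mul_inv_cancel₀ (by positivity)
  let q : (ι₂ → ℤˣ) × ι₂ → Matrix (Fin (Fintype.card (ι₁ × ι₂))) (Fin _) ℂ ×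
      Matrix (Fin (Fintype.card (ι₁ × ι₂))) (Fin _) ℂ := fun w => (φ w ((d : ℂ) • ρ), φ w h)
  have hq : ∀ w ∈ Finset.univ, q w ∈ {q : Matrix (Fin (Fintype.card (ι₁ × ι₂))) (Fin _) ℂ ×
      Matrix (Fin (Fintype.card (ι₁ × ι₂))) (Fin _) ℂ | q.1.PosDef} :=
    fun w _ => posDef_map (φ w) _ hdρ
  have havg : ∀ A : Matrix (ι₁ × ι₂) (ι₁ × ι₂) ℂ,
      ∑ w, c • φ w A = (d : ℂ)⁻¹ • ampl e (ptrace A) := by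
    intro A
    rw [← Finset.smul_sum, sum_signConj e τ hτ A]
    ext i j
    simp only [Matrix.smul_apply, Complex.real_smul, smul_eq_mul, c]
    push_cast
    have hNC : (N : ℂ) ≠ 0 := by exact_mod_cast hN.ne'
    rw [show ((Fintype.card (ι₂ → ℤˣ) : ℕ) : ℂ) = (N : ℂ) by simp [N]]
    field_simp
  have hsum : ∑ w, c • q w = (ampl e (ptrace ρ), (d : ℂ)⁻¹ • ampl e (ptrace h)) := by
    refine Prod.ext ?_ ?_
    · rw [Prod.fst_sum]
      simp only [q, Prod.smul_fst]
      rw [havg, show ptrace ((d : ℂ) • ρ) = (d : ℂ) • ptrace ρ by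
        ext i j; simp [ptrace, Finset.mul_sum], map_smul, inv_smul_smul₀ hdC]
    · rw [Prod.snd_sum]
      simp only [q, Prod.smul_snd]
      exact havg h
  have hmem := hcv.1.sum_mem (fun w _ => hc.le) hcard hq
  have hle := hcv.map_sum_le (fun w _ => hc.le) hcard hq
  rw [hsum] at hmem hle
  have hPD : (ampl e (ptrace ρ)).PosDef := hmem
  -- evaluate the values at the conjugates
  have hval : ∀ w, (Matrix.trace ((q w).2ᴴ * (E (q w).1) (q w).2)).re
      = (Matrix.trace (hᴴ * D h)).re := by
    intro w
    have := isFDerivMatFun_map (φ w) f' _ h hdρ.1 hh D hD _ (hE _ (posDef_map (φ w) _ hdρ))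
    simp only [q]
    rw [this, ← star_eq_conjTranspose, ← map_star, ← map_mul, trace_signConj,
      star_eq_conjTranspose]
  have hval2 := isFDerivMatFun_map (ampl e) f' _ (ptrace h) (ptrace_isHermitian ρ hρ.1)
    (ptrace_isHermitian h hh) D₁ hD₁ _ (hE _ hPD)
  simp only [hval] at hle
  rw [← Finset.sum_smul, hcard, one_smul, map_smul, hval2, Matrix.conjTranspose_smul,
    Matrix.smul_mul, Matrix.mul_smul, smul_smul, ← star_eq_conjTranspose, ← map_star, ← map_mul,
    Matrix.trace_smul, trace_ampl, star_eq_conjTranspose] at hle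
  have hfin : (star ((d : ℂ)⁻¹) * (d : ℂ)⁻¹) • ((Fintype.card ι₂ : ℂ) *
      (Matrix.trace ((ptrace h)ᴴ * D₁ (ptrace h))))
      = ((d : ℝ)⁻¹ : ℝ) * (Matrix.trace ((ptrace h)ᴴ * D₁ (ptrace h))) := by
    rw [← hd]
    simp
    field_simp
  rw [hfin, Complex.re_ofReal_mul] at hle
  rwa [inv_mul_le_iff₀ hdR] at hle
end
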